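/- (Ornstein–Shields inequality) For any stationary ergodic source with entropy rate H over a finite alphabet and any one-to-one code sequence γ, almost surely liminf_n ||γ(X_1,...,X_n)||/n ≥ H. -/

import Mathlib

open MeasureTheory Filter ENNReal

/-!
An injective code gives fewer than `2 ^ m` words a codeword of length less than `m`, so by the
Borel–Cantelli lemma codewords shorter than `c * n` occur only finitely often once
`p(x₁, …, xₙ) < 2 ^ (-d * n)` holds eventually for some `d > c`. What remains is the lower half of
the Shannon–McMillan–Breiman theorem: almost surely this holds for every `d < H`.

The set where `p(x₁, …, xₙ)` is infinitely often at least a constant times `2 ^ (-d * n)` is carried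
into itself by the shift, so it is null or conull. Suppose it is conull. Then almost every sequence
can be cut into blocks of probability at least about `2 ^ (-d * k)`, `k` the length of the block,
and a few single letters. Summing over all ways to cut a word into blocks, each block weighted by a
mixture of its probability and the uniform distribution, gives a subprobability on words of length
`n` which is at least about `2 ^ (-d * n)` at typical words. Gibbs' inequality then yields `H ≤ d`.
-/

namespace OrnsteinShields

section Renewal

variable {X : Type*}

/-- The renewal sequence `q` with step weights `g` along the orbits of `T`: `q 0 = 1` and
`q N x = ∑ g k x * q (N - k) (T^[k] x)` over `1 ≤ k ≤ N`. Equivalently, `q N x` is the total weight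
of all ways to cut the first `N` points of the orbit of `x` into consecutive blocks, where a block
of length `k` starting at `y` weighs `g k y`. -/
def renewal {R : Type*} [Semiring R] (T : X → X) (g : ℕ → X → R) : ℕ → X → R
  | 0, _ => 1
  | N + 1, x => ∑ k : Fin (N + 1), g (k + 1) x * renewal T g (N - k) (T^[k + 1] x)
termination_by N => N

/-- The points that start no block of length `1 ≤ n ≤ L` and weight at least `2 ^ (-c * n)`. -/
def lightSet (g : ℕ → X → ℝ) (c : ℝ) (L : ℕ) : Set X :=
  {x | ∀ n, 1 ≤ n → n ≤ L → g n x < 2 ^ (-(c * n))}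

variable {T : X → X} {g : ℕ → X → ℝ}

lemma renewal_nonneg (hg : ∀ n x, 0 ≤ g n x) (N : ℕ) (x : X) : 0 ≤ renewal T g N x := by
  induction N using Nat.strong_induction_on generalizing x with
  | _ N ih =>
    cases N with
    | zero => simp [renewal]
    | succ N =>
      rw [renewal]
      exact Finset.sum_nonneg fun k _ => mul_nonneg (hg _ _) (ih _ (by omega) _)

lemma mul_renewal_le_renewal_add (hg : ∀ n x, 0 ≤ g n x) {n : ℕ} (hn : 1 ≤ n) (m : ℕ) (x : X) :
    g n x * renewal T g m (T^[n] x) ≤ renewal T g (n + m) x := by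
  obtain ⟨k, rfl⟩ := Nat.exists_eq_add_of_le' hn
  have hterm := Finset.single_le_sum
    (f := fun j : Fin (k + m + 1) => g (j + 1) x * renewal T g (k + m - j) (T^[j + 1] x))
    (fun j _ => mul_nonneg (hg _ _) (renewal_nonneg hg _ _)) (Finset.mem_univ ⟨k, by omega⟩)
  rw [Nat.add_right_comm, renewal]
  simpa only [Nat.add_sub_cancel_left] using hterm

lemma two_rpow_neg_add_le_renewal_add (hg : ∀ n x, 0 ≤ g n x) {n m : ℕ} (hn : 1 ≤ n) {x : X}
    {a b : ℝ} (ha : 2 ^ (-a) ≤ g n x) (hb : 2 ^ (-b) ≤ renewal T g m (T^[n] x)) :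
    2 ^ (-(a + b)) ≤ renewal T g (n + m) x :=
  calc (2 : ℝ) ^ (-(a + b)) = 2 ^ (-a) * 2 ^ (-b) := by
        rw [neg_add, Real.rpow_add two_pos]
    _ ≤ g n x * renewal T g m (T^[n] x) := mul_le_mul ha hb (by positivity) (hg n x)
    _ ≤ renewal T g (n + m) x := mul_renewal_le_renewal_add hg hn m x

lemma two_rpow_neg_mul_le_renewal (hg : ∀ n x, 0 ≤ g n x) {B : ℝ} (hB : ∀ x, 2 ^ (-B) ≤ g 1 x)
    (N : ℕ) (x : X) : 2 ^ (-(B * N)) ≤ renewal T g N x := by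
  induction N generalizing x with
  | zero => simp [renewal]
  | succ N ih =>
    have := two_rpow_neg_add_le_renewal_add (m := N) hg le_rfl (hB x) (ih (T^[1] x))
    rw [add_comm N]
    convert this using 3
    push_cast
    ring

/-- Cut greedily: a block of weight at least `2 ^ (-c * n)` where one starts, a single letter at
points of the light set, and single letters once at most `L` points are left. -/
lemma two_rpow_neg_birkhoffSum_le_renewal (hg : ∀ n x, 0 ≤ g n x) {B c : ℝ} (hB₀ : 0 ≤ B)
    (hB : ∀ x, 2 ^ (-B) ≤ g 1 x) (hc : 0 ≤ c) (L N : ℕ) (x : X) :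
    2 ^ (-(c * N + B * (birkhoffSum T ((lightSet g c L).indicator 1) N x + L)))
      ≤ renewal T g N x := by
  have sum_nonneg (n : ℕ) (y : X) :
      0 ≤ birkhoffSum T ((lightSet g c L).indicator (1 : X → ℝ)) n y :=
    Finset.sum_nonneg fun i _ => Set.indicator_nonneg (fun _ _ => zero_le_one) _
  induction N using Nat.strong_induction_on generalizing x with
  | _ N ih =>
    rcases le_or_gt N L with hNL | hLN
    · refine le_trans ?_ (two_rpow_neg_mul_le_renewal hg hB N x)
      have hNL' : (N : ℝ) ≤ birkhoffSum T ((lightSet g c L).indicator 1) N x + L :=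
        (Nat.cast_le.2 hNL).trans (le_add_of_nonneg_left (sum_nonneg N x))
      refine Real.rpow_le_rpow_of_exponent_le one_le_two (neg_le_neg ?_)
      exact le_add_of_nonneg_of_le (by positivity) (mul_le_mul_of_nonneg_left hNL' hB₀)
    by_cases hx : x ∈ lightSet g c L
    · obtain ⟨m, rfl⟩ := Nat.exists_eq_add_of_le (Nat.one_le_of_lt hLN)
      refine le_trans ?_ (two_rpow_neg_add_le_renewal_add hg le_rfl (hB x) (ih m (by omega) _))
      rw [birkhoffSum_add, birkhoffSum_one, Set.indicator_of_mem hx, Pi.one_apply]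
      refine Real.rpow_le_rpow_of_exponent_le one_le_two (neg_le_neg ?_)
      push_cast
      linarith
    · simp only [lightSet, Set.mem_ofPred_eq, not_forall, not_lt] at hx
      obtain ⟨n, hn, hnL, hgn⟩ := hx
      obtain ⟨m, rfl⟩ := Nat.exists_eq_add_of_le (hnL.trans hLN.le)
      refine le_trans ?_ (two_rpow_neg_add_le_renewal_add hg hn hgn (ih m (by omega) _))
      rw [birkhoffSum_add]
      refine Real.rpow_le_rpow_of_exponent_le one_le_two (neg_le_neg ?_)
      push_cast
      linarith [mul_nonneg hB₀ (sum_nonneg n x)]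

end Renewal

section LightSet

variable {X : Type*} [MeasurableSpace X] {g : ℕ → X → ℝ}

lemma measurableSet_lightSet (hg : ∀ n, Measurable (g n)) (c : ℝ) (L : ℕ) :
    MeasurableSet (lightSet g c L) := by
  simp only [lightSet, Set.ofPred_forall]
  exact .iInter fun n => .iInter fun _ => .iInter fun _ => measurableSet_lt (hg n) measurable_const

lemma tendsto_measureReal_lightSet (hg : ∀ n, Measurable (g n)) {μ : Measure X}
    [IsFiniteMeasure μ] {c : ℝ}
    (hc : ∀ᵐ x ∂μ, ∃ n : ℕ, 1 ≤ n ∧ 2 ^ (-(c * n)) ≤ g n x) :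
    Tendsto (fun L => μ.real (lightSet g c L)) atTop (nhds 0) := by
  have hanti : Antitone (lightSet g c) := fun L M hLM x hx n hn hnL => hx n hn (hnL.trans hLM)
  have hnull : μ (⋂ L, lightSet g c L) = 0 := by
    rw [measure_eq_zero_iff_ae_notMem]
    filter_upwards [hc] with x ⟨n, hn, hgn⟩ hx
    exact (Set.mem_iInter.1 hx n n hn le_rfl).not_ge hgn
  have hlim := tendsto_measure_iInter_atTop (μ := μ)
    (fun L => (measurableSet_lightSet hg c L).nullMeasurableSet) hanti ⟨0, measure_ne_top _ _⟩
  rw [hnull] at hlim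
  exact (ENNReal.tendsto_toReal zero_ne_top).comp hlim

end LightSet

section Shift

variable {α : Type*}

/-- The one-sided shift. -/
def shift (x : ℕ → α) : ℕ → α := fun n => x (n + 1)

/-- The word `(x₁, …, xₙ)` formed by the first `n` letters of a sequence. -/
def block (n : ℕ) (x : ℕ → α) : Fin n → α := fun i => x i

/-- The concatenation of a finite word and a sequence. -/
def prepend {n : ℕ} (w : Fin n → α) (x : ℕ → α) : ℕ → α :=
  fun i => if h : i < n then w ⟨i, h⟩ else x (i - n)

lemma shift_iterate_apply (n : ℕ) (x : ℕ → α) (i : ℕ) : shift^[n] x i = x (i + n) := by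
  induction n generalizing x with
  | zero => rfl
  | succ n ih => rw [Function.iterate_succ_apply, ih, shift, Nat.add_assoc]

lemma block_prepend {n : ℕ} (w : Fin n → α) (x : ℕ → α) : block n (prepend w x) = w := by
  ext i
  simp [block, prepend]

lemma prepend_block_apply {n i : ℕ} (hi : i < n) (x y : ℕ → α) :
    prepend (block n x) y i = x i := by
  simp [block, prepend, hi]

lemma shift_iterate_prepend {n : ℕ} (w : Fin n → α) (x : ℕ → α) : shift^[n] (prepend w x) = x := by
  ext i
  simp [shift_iterate_apply, prepend]

lemma prepend_append {n m : ℕ} (u : Fin n → α) (v : Fin m → α) (x : ℕ → α) :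
    prepend (Fin.append u v) x = prepend u (prepend v x) := by
  ext i
  simp only [prepend, Fin.append, Fin.addCases, eq_rec_constant, Fin.castLT_mk, Fin.cast_mk,
    Fin.subNat_mk]
  split_ifs <;> first | rfl | omega | rw [Nat.sub_sub]

lemma dependsOn_renewal_shift {g : ℕ → (ℕ → α) → ℝ} (hg : ∀ n, DependsOn (g n) (Set.Iio n))
    (N : ℕ) : DependsOn (renewal shift g N) (Set.Iio N) := by
  induction N using Nat.strong_induction_on with
  | _ N ih =>
    intro x y hxy
    cases N with
    | zero => simp [renewal]
    | succ N =>
      simp only [Set.mem_Iio] at hxy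
      rw [renewal, renewal]
      refine Finset.sum_congr rfl fun k _ => congrArg₂ _ (hg _ fun i hi => ?_)
        (ih _ (by omega) fun i hi => ?_)
      · exact hxy i (by simp only [Set.mem_Iio] at hi; omega)
      · simp only [Set.mem_Iio] at hi
        rw [shift_iterate_apply, shift_iterate_apply]
        exact hxy _ (by omega)

end Shift

section Transfer

variable {α : Type*} [Fintype α]

/-- The `n`-th iterate of the transfer operator of the shift, with zero potential: the value at `x`
is the sum of `f` over the `n`-fold preimages of `x`. It plays the role of summing over all words of
length `n`. -/
def transfer {M : Type*} [AddCommMonoid M] (n : ℕ) (f : (ℕ → α) → M) (x : ℕ → α) : M :=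
  ∑ w : Fin n → α, f (prepend w x)

lemma transfer_add {M : Type*} [AddCommMonoid M] (n m : ℕ) (f : (ℕ → α) → M) (x : ℕ → α) :
    transfer (n + m) f x = transfer m (transfer n f) x := by
  simp only [transfer, ← prepend_append]
  rw [← (Fin.appendEquiv n m).sum_comp, Fintype.sum_prod_type_right]
  rfl

lemma transfer_mul_comp_shift {R : Type*} [NonUnitalNonAssocSemiring R] (n : ℕ)
    (f h : (ℕ → α) → R) (x : ℕ → α) :
    transfer n (fun y => f y * h (shift^[n] y)) x = transfer n f x * h x := by
  simp only [transfer, shift_iterate_prepend, Finset.sum_mul]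

lemma transfer_renewal_succ {R : Type*} [Semiring R] (g : ℕ → (ℕ → α) → R) (N : ℕ) (x : ℕ → α) :
    transfer (N + 1) (renewal shift g (N + 1)) x = ∑ k : Fin (N + 1),
      transfer (N - k) (fun y => transfer (k + 1) (g (k + 1)) y * renewal shift g (N - k) y) x := by
  calc transfer (N + 1) (renewal shift g (N + 1)) x
      = ∑ k : Fin (N + 1), transfer (N + 1)
          (fun y => g (k + 1) y * renewal shift g (N - k) (shift^[k + 1] y)) x := by
        simp only [transfer, renewal]
        exact Finset.sum_comm
    _ = _ := Finset.sum_congr rfl fun k _ => by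
        have hk : N + 1 = k + 1 + (N - k) := by omega
        refine (congrArg (transfer · _ x) hk).trans ?_
        rw [transfer_add]
        exact congrArg (transfer (N - k) · x) (funext (transfer_mul_comp_shift _ _ _))

lemma transfer_renewal_le_one {g : ℕ → (ℕ → α) → ℝ} {v : ℕ → ℝ} (hg : ∀ n x, 0 ≤ g n x)
    (hgv : ∀ n x, transfer n (g n) x ≤ v n) (hv₀ : ∀ n, 0 ≤ v n)
    (hv : ∀ n, ∑ k ∈ Finset.range n, v (k + 1) ≤ 1) (N : ℕ) (x : ℕ → α) :
    transfer N (renewal shift g N) x ≤ 1 := by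
  induction N using Nat.strong_induction_on with
  | _ N ih =>
    cases N with
    | zero => simp [transfer, renewal]
    | succ N =>
      calc transfer (N + 1) (renewal shift g (N + 1)) x
          = ∑ k : Fin (N + 1), transfer (N - k)
              (fun y => transfer (k + 1) (g (k + 1)) y * renewal shift g (N - k) y) x :=
            transfer_renewal_succ g N x
        _ ≤ ∑ k : Fin (N + 1), v (k + 1) * transfer (N - k) (renewal shift g (N - k)) x := by
            simp only [transfer, Finset.mul_sum]
            gcongr
            · exact renewal_nonneg hg _ _
            · exact hgv _ _
        _ ≤ ∑ k : Fin (N + 1), v (k + 1) :=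
            Finset.sum_le_sum fun k _ => mul_le_of_le_one_right (hv₀ _) (ih _ (by omega))
        _ = ∑ k ∈ Finset.range (N + 1), v (k + 1) :=
            Fin.sum_univ_eq_sum_range (fun k => v (k + 1)) (N + 1)
        _ ≤ 1 := hv _

end Transfer

section BirkhoffSum

variable {X : Type*} [MeasurableSpace X] {μ : Measure X} {T : X → X}
  {E : Type*} [NormedAddCommGroup E] {f : X → E}

lemma integrable_birkhoffSum (hT : MeasurePreserving T μ μ) (hf : Integrable f μ) (n : ℕ) :
    Integrable (birkhoffSum T f n) μ :=
  integrable_finsetSum _ fun i _ => (hT.iterate i).integrable_comp_of_integrable hf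

lemma integral_birkhoffSum [NormedSpace ℝ E] (hT : MeasurePreserving T μ μ) (hf : Integrable f μ)
    (n : ℕ) : ∫ x, birkhoffSum T f n x ∂μ = n • ∫ x, f x ∂μ := by
  have hterm (i : ℕ) : ∫ x, f (T^[i] x) ∂μ = ∫ x, f x ∂μ := by
    have hi := hT.iterate i
    conv_rhs => rw [← hi.map_eq]
    exact (integral_map hi.aemeasurable (by rw [hi.map_eq]; exact hf.aestronglyMeasurable)).symm
  calc ∫ x, birkhoffSum T f n x ∂μ = ∑ i ∈ Finset.range n, ∫ x, f (T^[i] x) ∂μ :=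
        integral_finsetSum _ fun i _ => (hT.iterate i).integrable_comp_of_integrable hf
    _ = n • ∫ x, f x ∂μ := by simp [hterm]

end BirkhoffSum

lemma gibbs_inequality {ι : Type*} {s : Finset ι} {p q : ι → ℝ} {b : ℝ} (hb : 1 < b)
    (hp : ∀ i ∈ s, 0 ≤ p i) (hq : ∀ i ∈ s, 0 < q i) (hpq : ∑ i ∈ s, q i ≤ ∑ i ∈ s, p i) :
    ∑ i ∈ s, p i * Real.logb b (q i) ≤ ∑ i ∈ s, p i * Real.logb b (p i) := by
  have hterm (i) (hi : i ∈ s) : p i - q i ≤ p i * Real.log (p i) - p i * Real.log (q i) := by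
    rcases (hp i hi).eq_or_lt with h | h
    · simpa [← h] using (hq i hi).le
    · have := mul_le_mul_of_nonneg_left (Real.one_sub_inv_le_log_of_pos (div_pos h (hq i hi))) h.le
      rw [Real.log_div h.ne' (hq i hi).ne', inv_div] at this
      calc p i - q i = p i * (1 - q i / p i) := by field_simp
        _ ≤ _ := by linarith
  have hsum := Finset.sum_le_sum hterm
  rw [Finset.sum_sub_distrib, Finset.sum_sub_distrib] at hsum
  simp only [Real.logb, ← mul_div_assoc, ← Finset.sum_div]
  exact div_le_div_of_nonneg_right (by linarith) (Real.log_pos hb).le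

section Entropy

variable {α : Type*} [MeasurableSpace α]

/-- The probability `p(w)` that the source starts with the word `w`. -/
noncomputable def blockProb (μ : Measure (ℕ → α)) {n : ℕ} (w : Fin n → α) : ℝ :=
  μ.real {y | ∀ i : Fin n, y i = w i}

/-- The Shannon entropy, in bits, of the first `n` letters of the source. -/
noncomputable def blockEntropy [Fintype α] (μ : Measure (ℕ → α)) (n : ℕ) : ℝ :=
  -∑ w : Fin n → α, blockProb μ w * Real.logb 2 (blockProb μ w)

/-- The source `μ` has entropy rate `H`, in bits per letter. -/
def HasEntropyRate [Fintype α] (μ : Measure (ℕ → α)) (H : ℝ) : Prop :=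
  Tendsto (fun n : ℕ => (1 / (n : ℝ)) * blockEntropy μ n) atTop (nhds H)

lemma measurable_block (n : ℕ) : Measurable (block n : (ℕ → α) → Fin n → α) :=
  measurable_pi_lambda _ fun _ => measurable_pi_apply _

lemma measurable_of_dependsOn_Iio [Finite α] [MeasurableSingletonClass α] {β : Type*}
    [MeasurableSpace β] {f : (ℕ → α) → β} {n : ℕ} (hf : DependsOn f (Set.Iio n)) :
    Measurable f := by
  rcases isEmpty_or_nonempty (ℕ → α) with _ | ⟨⟨x₀⟩⟩
  · exact measurable_of_empty f
  have hfac : f = (fun w : Fin n → α => f (prepend w x₀)) ∘ block n :=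
    funext fun x => hf fun i hi => (prepend_block_apply hi x x₀).symm
  rw [hfac]
  exact Measurable.of_discrete.comp (measurable_block n)

lemma dependsOn_blockProb (μ : Measure (ℕ → α)) (n : ℕ) :
    DependsOn (fun x => blockProb μ (block n x)) (Set.Iio n) := fun _ _ hxy =>
  congrArg (blockProb μ) (funext fun i => hxy i i.isLt)

lemma blockProb_nonneg (μ : Measure (ℕ → α)) {n : ℕ} (w : Fin n → α) : 0 ≤ blockProb μ w :=
  measureReal_nonneg

lemma blockProb_eq_map_block [MeasurableSingletonClass α] (μ : Measure (ℕ → α)) {n : ℕ}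
    (w : Fin n → α) : blockProb μ w = (μ.map (block n)).real {w} := by
  rw [map_measureReal_apply (measurable_block n) (measurableSet_singleton w), blockProb]
  congr 1
  ext y
  simp [block, funext_iff]

variable [MeasurableSingletonClass α]

lemma integral_comp_block [Fintype α] (μ : Measure (ℕ → α)) [IsFiniteMeasure μ] {n : ℕ}
    (f : (Fin n → α) → ℝ) : ∫ x, f (block n x) ∂μ = ∑ w, blockProb μ w * f w := by
  rw [← integral_map (measurable_block n).aemeasurable Measurable.of_discrete.aestronglyMeasurable,
    integral_fintype Integrable.of_finite]
  simp only [blockProb_eq_map_block, smul_eq_mul]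

lemma sum_blockProb [Fintype α] (μ : Measure (ℕ → α)) [IsProbabilityMeasure μ] (n : ℕ) :
    ∑ w : Fin n → α, blockProb μ w = 1 := by
  simpa using (integral_comp_block μ (n := n) fun _ => 1).symm

lemma blockEntropy_le_integral [Fintype α] {μ : Measure (ℕ → α)} [IsProbabilityMeasure μ] {N : ℕ}
    {f E : (ℕ → α) → ℝ} (hf : DependsOn f (Set.Iio N)) (hf₁ : ∀ x, transfer N f x ≤ 1)
    (hfE : ∀ x, 2 ^ (-E x) ≤ f x) (hE : Integrable E μ) : blockEntropy μ N ≤ ∫ x, E x ∂μ := by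
  obtain ⟨x₀⟩ := μ.nonempty_of_neZero
  have hpos (x) : 0 < f x := lt_of_lt_of_le (by positivity) (hfE x)
  have hlog (x) : -Real.logb 2 (f (prepend (block N x) x₀)) ≤ E x := by
    rw [hf fun i hi => prepend_block_apply hi x x₀, neg_le,
      Real.le_logb_iff_rpow_le one_lt_two (hpos x)]
    exact hfE x
  have gibbs := gibbs_inequality one_lt_two (s := Finset.univ)
    (q := fun w : Fin N → α => f (prepend w x₀)) (fun w _ => blockProb_nonneg μ w)
    (fun w _ => hpos _) ((hf₁ x₀).trans (sum_blockProb μ N).ge)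
  calc blockEntropy μ N
      ≤ ∑ w : Fin N → α, blockProb μ w * -Real.logb 2 (f (prepend w x₀)) := by
        simpa only [mul_neg, Finset.sum_neg_distrib, blockEntropy] using neg_le_neg gibbs
    _ = ∫ x, -Real.logb 2 (f (prepend (block N x) x₀)) ∂μ :=
        (integral_comp_block μ fun w => -Real.logb 2 (f (prepend w x₀))).symm
    _ ≤ ∫ x, E x ∂μ := integral_mono
        ((Integrable.of_finite (f := fun w => -Real.logb 2 (f (prepend w x₀)))).comp_measurable
          (measurable_block N)) hE hlog

end Entropy

lemma sum_range_one_div_succ_mul_succ (n : ℕ) :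
    ∑ k ∈ Finset.range n, 1 / (((k + 1 : ℕ) : ℝ) * ((k + 1 : ℕ) + 1)) = 1 - 1 / (n + 1) := by
  induction n with
  | zero => simp
  | succ n ih =>
    rw [Finset.sum_range_succ, ih]
    push_cast
    field_simp
    ring

section BlockWeight

variable {α : Type*} [Fintype α] [MeasurableSpace α]

/-- The mixture of the source and the uniform distribution on words of length `n`, as a function of
the first `n` letters, scaled to total mass `1 / (n * (n + 1))` so that the masses over all `n ≥ 1`
add up to `1`. At the junk length `n = 0` it vanishes. -/
noncomputable def blockWeight (μ : Measure (ℕ → α)) (n : ℕ) (x : ℕ → α) : ℝ :=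
  (blockProb μ (block n x) + ((Fintype.card α : ℝ) ^ n)⁻¹) / (2 * (n * (n + 1)))

lemma blockWeight_nonneg (μ : Measure (ℕ → α)) (n : ℕ) (x : ℕ → α) : 0 ≤ blockWeight μ n x := by
  have := blockProb_nonneg μ (block n x)
  unfold blockWeight
  positivity

lemma blockProb_div_le_blockWeight (μ : Measure (ℕ → α)) (n : ℕ) (x : ℕ → α) :
    blockProb μ (block n x) / (2 * (n * (n + 1))) ≤ blockWeight μ n x := by
  unfold blockWeight
  gcongr
  exact le_add_of_nonneg_right (by positivity)

lemma two_rpow_neg_logb_card_le_blockWeight_one (μ : Measure (ℕ → α)) (x : ℕ → α) :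
    2 ^ (-Real.logb 2 (4 * Fintype.card α)) ≤ blockWeight μ 1 x := by
  have : Nonempty α := ⟨x 0⟩
  have : (0 : ℝ) < Fintype.card α := by exact_mod_cast Fintype.card_pos
  calc (2 : ℝ) ^ (-Real.logb 2 (4 * Fintype.card α))
      = ((Fintype.card α : ℝ) ^ 1)⁻¹ / (2 * ((1 : ℕ) * ((1 : ℕ) + 1))) := by
        rw [Real.rpow_neg zero_le_two, Real.rpow_logb two_pos (by norm_num) (by positivity)]
        field_simp
        norm_num
    _ ≤ blockWeight μ 1 x := by
        unfold blockWeight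
        gcongr
        exact le_add_of_nonneg_left (blockProb_nonneg μ _)

lemma dependsOn_blockWeight (μ : Measure (ℕ → α)) (n : ℕ) :
    DependsOn (blockWeight μ n) (Set.Iio n) := fun x y hxy => by
  simp only [blockWeight, dependsOn_blockProb μ n hxy]

variable [MeasurableSingletonClass α]

lemma transfer_blockWeight (μ : Measure (ℕ → α)) [IsProbabilityMeasure μ] (n : ℕ) (x : ℕ → α) :
    transfer n (blockWeight μ n) x = 1 / (n * (n + 1)) := by
  have : Nonempty α := ⟨x 0⟩
  have hunif : ∑ _w : Fin n → α, ((Fintype.card α : ℝ) ^ n)⁻¹ = 1 := by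
    simp
  simp only [transfer, blockWeight, block_prepend]
  rw [← Finset.sum_div, Finset.sum_add_distrib, sum_blockProb, hunif, one_add_one_eq_two]
  rw [← div_div, div_self two_ne_zero]

lemma transfer_renewal_blockWeight_le_one (μ : Measure (ℕ → α)) [IsProbabilityMeasure μ] (N : ℕ)
    (x : ℕ → α) : transfer N (renewal shift (blockWeight μ) N) x ≤ 1 := by
  refine transfer_renewal_le_one (v := fun n => 1 / (n * (n + 1))) (blockWeight_nonneg μ)
    (fun n x => (transfer_blockWeight μ n x).le) (fun n => by positivity) (fun n => ?_) N x
  rw [sum_range_one_div_succ_mul_succ]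
  exact sub_le_self _ (by positivity)

lemma blockEntropy_le {μ : Measure (ℕ → α)} [IsProbabilityMeasure μ]
    (hμ : MeasurePreserving shift μ μ) {c : ℝ} (hc : 0 ≤ c) (L N : ℕ) :
    blockEntropy μ N ≤ c * N + Real.logb 2 (4 * Fintype.card α) *
      (N * μ.real (lightSet (blockWeight μ) c L) + L) := by
  set A := lightSet (blockWeight μ) c L
  obtain ⟨x₀⟩ := μ.nonempty_of_neZero
  have : Nonempty α := ⟨x₀ 0⟩
  have hB : 0 ≤ Real.logb 2 (4 * Fintype.card α) := by
    have : (1 : ℝ) ≤ Fintype.card α := by exact_mod_cast Fintype.card_pos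
    exact Real.logb_nonneg one_lt_two (by linarith)
  have hA : MeasurableSet A :=
    measurableSet_lightSet (fun n => measurable_of_dependsOn_Iio (dependsOn_blockWeight μ n)) c L
  have hind : Integrable (A.indicator (1 : (ℕ → α) → ℝ)) μ := (integrable_const 1).indicator hA
  have hsum := integrable_birkhoffSum hμ hind N
  have hsumL : Integrable (fun x => birkhoffSum shift (A.indicator (1 : (ℕ → α) → ℝ)) N x + L) μ :=
    hsum.add (integrable_const _)
  refine (blockEntropy_le_integral (dependsOn_renewal_shift (dependsOn_blockWeight μ) N)
    (transfer_renewal_blockWeight_le_one μ N) (two_rpow_neg_birkhoffSum_le_renewal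
      (blockWeight_nonneg μ) hB (two_rpow_neg_logb_card_le_blockWeight_one μ) hc L N)
    ((integrable_const _).add (hsumL.const_mul _))).trans_eq ?_
  rw [integral_add (integrable_const _) (hsumL.const_mul _), integral_const_mul (Real.logb 2 _),
    integral_add hsum (integrable_const _), integral_birkhoffSum hμ hind,
    integral_indicator_one hA]
  simp

lemma HasEntropyRate.le_of_ae_exists_le_blockWeight {μ : Measure (ℕ → α)} [IsProbabilityMeasure μ]
    (hμ : MeasurePreserving shift μ μ) {H : ℝ} (hH : HasEntropyRate μ H)
    {c : ℝ} (hc₀ : 0 ≤ c)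
    (hc : ∀ᵐ x ∂μ, ∃ n : ℕ, 1 ≤ n ∧ 2 ^ (-(c * n)) ≤ blockWeight μ n x) : H ≤ c := by
  set B := Real.logb 2 (4 * Fintype.card α)
  set a := fun L => μ.real (lightSet (blockWeight μ) c L)
  have hbound (L : ℕ) : H ≤ c + B * a L := by
    have hlim : Tendsto (fun n : ℕ => c + B * a L + B * L / n) atTop (nhds (c + B * a L)) := by
      simpa using tendsto_const_nhds.add (tendsto_const_div_atTop_nhds_zero_nat (B * L))
    refine le_of_tendsto_of_tendsto hH hlim ?_
    filter_upwards [eventually_gt_atTop 0] with n hn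
    calc 1 / (n : ℝ) * blockEntropy μ n
        ≤ 1 / (n : ℝ) * (c * n + B * (n * a L + L)) := by
          gcongr
          exact blockEntropy_le hμ hc₀ L n
      _ = c + B * a L + B * L / n := by
          field_simp
          ring
  have ha : Tendsto a atTop (nhds 0) := tendsto_measureReal_lightSet
    (fun n => measurable_of_dependsOn_Iio (dependsOn_blockWeight μ n)) hc
  simpa using ge_of_tendsto' (tendsto_const_nhds.add (ha.const_mul B)) hbound

end BlockWeight

section ShannonMcMillanBreiman

variable {α : Type*} [MeasurableSpace α]

/-- The sequences `x` with `p(x₁, …, xₙ) ≥ 2 ^ (-c * n - K)` for infinitely many `n`, for some `K`.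
The constant `K` makes this set forward invariant under the shift. -/
def frequentlyHeavy (μ : Measure (ℕ → α)) (c : ℝ) : Set (ℕ → α) :=
  {x | ∃ K : ℕ, ∃ᶠ n : ℕ in atTop, 2 ^ (-(c * n + K)) ≤ blockProb μ (block n x)}

lemma notMem_frequentlyHeavy_iff {μ : Measure (ℕ → α)} {c : ℝ} {x : ℕ → α} :
    x ∉ frequentlyHeavy μ c ↔
      ∀ K : ℕ, ∀ᶠ n : ℕ in atTop, blockProb μ (block n x) < 2 ^ (-(c * n + K)) := by
  simp only [frequentlyHeavy, Set.mem_ofPred_eq, not_exists, not_frequently, not_le]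

lemma eventually_mul_le_two_rpow {δ : ℝ} (hδ : 0 < δ) (C : ℝ) :
    ∀ᶠ n : ℕ in atTop, C * (n * (n + 1)) ≤ 2 ^ (δ * n) := by
  have hr : 1 < (2 : ℝ) ^ δ := Real.one_lt_rpow one_lt_two hδ
  have hlim : Tendsto (fun n : ℕ => C * ((n : ℝ) ^ 2 / (2 ^ δ) ^ n + (n : ℝ) ^ 1 / (2 ^ δ) ^ n))
      atTop (nhds 0) := by
    simpa using ((tendsto_pow_const_div_const_pow_of_one_lt 2 hr).add
      (tendsto_pow_const_div_const_pow_of_one_lt 1 hr)).const_mul C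
  filter_upwards [hlim.eventually_le_const one_pos] with n hn
  rw [Real.rpow_mul zero_le_two, Real.rpow_natCast]
  rw [← add_div, ← mul_div_assoc, div_le_one (by positivity)] at hn
  linarith

lemma exists_two_rpow_le_blockWeight [Fintype α] {μ : Measure (ℕ → α)} {c d : ℝ} (hcd : c < d)
    {x : ℕ → α} (hx : x ∈ frequentlyHeavy μ c) :
    ∃ n : ℕ, 1 ≤ n ∧ 2 ^ (-(d * n)) ≤ blockWeight μ n x := by
  obtain ⟨K, hK⟩ := hx
  obtain ⟨n, hP, hn₁, hpoly⟩ := (hK.and_eventually ((eventually_ge_atTop 1).and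
    (eventually_mul_le_two_rpow (sub_pos.2 hcd) (2 ^ K * 2)))).exists
  refine ⟨n, hn₁, le_trans ?_ (blockProb_div_le_blockWeight μ n x)⟩
  have : (0 : ℝ) < n := by exact_mod_cast hn₁
  rw [le_div_iff₀ (by positivity)]
  calc 2 ^ (-(d * n)) * (2 * ((n : ℝ) * (n + 1)))
      = 2 ^ (-(d * n)) * 2 ^ (-(K : ℝ)) * (2 ^ K * 2 * ((n : ℝ) * (n + 1))) := by
        rw [Real.rpow_neg zero_le_two (K : ℝ), Real.rpow_natCast]
        field_simp
    _ ≤ 2 ^ (-(d * n)) * 2 ^ (-(K : ℝ)) * 2 ^ ((d - c) * n) := by gcongr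
    _ = 2 ^ (-(c * n + K)) := by
        rw [← Real.rpow_add two_pos, ← Real.rpow_add two_pos]
        ring_nf
    _ ≤ blockProb μ (block n x) := hP

variable [MeasurableSingletonClass α]

lemma blockProb_succ_le_blockProb_shift {μ : Measure (ℕ → α)} [IsFiniteMeasure μ]
    (hμ : MeasurePreserving shift μ μ) (n : ℕ) (x : ℕ → α) :
    blockProb μ (block (n + 1) x) ≤ blockProb μ (block n (shift x)) := by
  have hmeas : MeasurableSet {y : ℕ → α | ∀ i : Fin n, y i = block n (shift x) i} := by
    simp only [Set.ofPred_forall]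
    exact .iInter fun i => measurable_pi_apply _ (measurableSet_singleton _)
  rw [blockProb, blockProb, ← hμ.measureReal_preimage hmeas.nullMeasurableSet]
  exact measureReal_mono fun y hy i => hy i.succ

lemma measurableSet_frequentlyHeavy [Finite α] (μ : Measure (ℕ → α)) (c : ℝ) :
    MeasurableSet (frequentlyHeavy μ c) := by
  have hunion : frequentlyHeavy μ c = ⋃ K : ℕ, ⋂ M : ℕ, ⋃ n : ℕ, ⋃ _ : M ≤ n,
      {x | 2 ^ (-(c * n + K)) ≤ blockProb μ (block n x)} := by
    ext x
    simp [frequentlyHeavy, frequently_atTop]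
  rw [hunion]
  exact .iUnion fun K => .iInter fun M => .iUnion fun n => .iUnion fun _ =>
    measurableSet_le measurable_const (measurable_of_dependsOn_Iio (dependsOn_blockProb μ n))

lemma frequentlyHeavy_subset_preimage_shift {μ : Measure (ℕ → α)} [IsFiniteMeasure μ]
    (hμ : MeasurePreserving shift μ μ) (c : ℝ) :
    frequentlyHeavy μ c ⊆ shift ⁻¹' frequentlyHeavy μ c := by
  rintro x ⟨K, hK⟩
  refine ⟨K + ⌈c⌉₊, ?_⟩
  have hK' := (frequently_map (m := (· + 1))).1
    ((map_add_atTop_eq_nat 1).symm ▸ hK)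
  refine hK'.mono fun n hn => ?_
  refine le_trans ?_ (hn.trans (blockProb_succ_le_blockProb_shift hμ n x))
  refine Real.rpow_le_rpow_of_exponent_le one_le_two (neg_le_neg ?_)
  push_cast
  linarith [Nat.le_ceil c]

lemma ae_eventually_blockProb_lt [Fintype α] {μ : Measure (ℕ → α)} [IsProbabilityMeasure μ]
    (hμ : Ergodic shift μ) {H : ℝ} (hH : HasEntropyRate μ H)
    {c : ℝ} (hc₀ : 0 ≤ c) (hc : c < H) :
    ∀ᵐ x ∂μ, ∀ᶠ n : ℕ in atTop, blockProb μ (block n x) < 2 ^ (-(c * n)) := by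
  rcases hμ.ae_empty_or_univ_of_ae_le_preimage (measurableSet_frequentlyHeavy μ c).nullMeasurableSet
    (frequentlyHeavy_subset_preimage_shift hμ.toMeasurePreserving c).eventuallyLE with hnull | hfull
  · filter_upwards [eventuallyEq_empty.1 hnull] with x hx
    simpa using notMem_frequentlyHeavy_iff.1 hx 0
  · obtain ⟨d, hcd, hdH⟩ := exists_between hc
    refine absurd (hH.le_of_ae_exists_le_blockWeight hμ.toMeasurePreserving
      (hc₀.trans hcd.le) ?_) hdH.not_ge
    filter_upwards [eventuallyEq_univ.1 hfull] with x hx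
    exact exists_two_rpow_le_blockWeight hcd hx

end ShannonMcMillanBreiman

section Code

lemma card_lt_pow_of_forall_length_lt {β : Type*} [Fintype β] (hβ : 2 ≤ Fintype.card β)
    {s : Finset (List β)} {k : ℕ} (hs : ∀ l ∈ s, l.length < k) :
    s.card < Fintype.card β ^ k :=
  calc s.card = ∑ m ∈ Finset.range k, (s.filter fun l => l.length = m).card :=
        Finset.card_eq_sum_card_fiberwise fun l hl => Finset.mem_range.2 (hs l hl)
    _ ≤ ∑ m ∈ Finset.range k, Fintype.card β ^ m :=
        Finset.sum_le_sum fun _ _ => Finset.card_filter_length_eq_le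
    _ < Fintype.card β ^ k := Nat.geomSum_lt hβ fun _ => Finset.mem_range.1

lemma card_le_two_mul_two_rpow {ι : Type*} {f : ι → List Bool} (hf : Function.Injective f)
    {s : Finset ι} {r : ℝ} (hr : 0 ≤ r) (hs : ∀ i ∈ s, ((f i).length : ℝ) < r) :
    (s.card : ℝ) ≤ 2 * 2 ^ r := by
  have hcard : s.card < 2 ^ ⌈r⌉₊ := by
    rw [← Finset.card_map ⟨f, hf⟩, ← Fintype.card_bool]
    refine card_lt_pow_of_forall_length_lt le_rfl fun l hl => ?_
    obtain ⟨i, hi, rfl⟩ := Finset.mem_map.1 hl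
    exact Nat.lt_ceil.2 (hs i hi)
  calc (s.card : ℝ) ≤ 2 ^ (⌈r⌉₊ : ℝ) := by
        rw [Real.rpow_natCast]
        exact_mod_cast hcard.le
    _ ≤ 2 ^ (r + 1) :=
        Real.rpow_le_rpow_of_exponent_le one_le_two (Nat.ceil_lt_add_one hr).le
    _ = 2 * 2 ^ r := by rw [Real.rpow_add_one two_ne_zero, mul_comm]

variable {α : Type*} [MeasurableSpace α]

lemma measureReal_preimage_block_le {μ : Measure (ℕ → α)} [IsFiniteMeasure μ] {n : ℕ}
    {s : Finset (Fin n → α)} {t : ℝ} (hs : ∀ w ∈ s, blockProb μ w ≤ t) :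
    μ.real (block n ⁻¹' s) ≤ s.card * t :=
  calc μ.real (block n ⁻¹' s) ≤ μ.real (⋃ w ∈ s, {y | ∀ i : Fin n, y i = w i}) :=
        measureReal_mono (fun y hy => Set.mem_biUnion hy fun _ => rfl) (measure_ne_top _ _)
    _ ≤ ∑ w ∈ s, blockProb μ w := measureReal_biUnion_finset_le _ _
    _ ≤ s.card * t := by simpa using Finset.sum_le_card_nsmul s _ t hs

variable [Finite α] {γ : ∀ n : ℕ, (Fin n → α) → List Bool}

lemma measureReal_length_lt_le {μ : Measure (ℕ → α)} [IsFiniteMeasure μ] {n : ℕ}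
    {f : (Fin n → α) → List Bool} (hf : Function.Injective f) {c : ℝ} (hc : 0 ≤ c) (d : ℝ) :
    μ.real {x | ((f (block n x)).length : ℝ) < c * n ∧ blockProb μ (block n x) < 2 ^ (-(d * n))} ≤
      2 * (2 ^ (c - d)) ^ n := by
  classical
  have := Fintype.ofFinite α
  set s := Finset.univ.filter fun w : Fin n → α =>
    ((f w).length : ℝ) < c * n ∧ blockProb μ w < 2 ^ (-(d * n))
  have hs : {x : ℕ → α | ((f (block n x)).length : ℝ) < c * n ∧
      blockProb μ (block n x) < 2 ^ (-(d * n))} = block n ⁻¹' s := by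
    ext x
    simp [s]
  calc _ ≤ s.card * (2 : ℝ) ^ (-(d * n)) := by
        rw [hs]
        exact measureReal_preimage_block_le fun w hw => (Finset.mem_filter.1 hw).2.2.le
    _ ≤ 2 * 2 ^ (c * n) * 2 ^ (-(d * n)) := by
        gcongr
        exact card_le_two_mul_two_rpow hf (by positivity) fun w hw => (Finset.mem_filter.1 hw).2.1
    _ = 2 * (2 ^ (c - d)) ^ n := by
        rw [mul_assoc, ← Real.rpow_add two_pos, ← Real.rpow_mul_natCast zero_le_two]
        ring_nf

lemma ae_eventually_le_length_of_blockProb_lt (μ : Measure (ℕ → α)) [IsFiniteMeasure μ]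
    (hγ : ∀ n, Function.Injective (γ n)) {c d : ℝ} (hc : 0 ≤ c) (hcd : c < d) :
    ∀ᵐ x ∂μ, ∀ᶠ n : ℕ in atTop, blockProb μ (block n x) < 2 ^ (-(d * n)) →
      c * n ≤ (γ n (block n x)).length := by
  have hr : (2 : ℝ) ^ (c - d) < 1 := Real.rpow_lt_one_of_one_lt_of_neg one_lt_two (by linarith)
  have hsum : Summable fun n : ℕ => 2 * ((2 : ℝ) ^ (c - d)) ^ n :=
    (summable_geometric_of_lt_one (by positivity) hr).mul_left 2
  have hfin : ∑' n : ℕ, μ {x | ((γ n (block n x)).length : ℝ) < c * n ∧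
      blockProb μ (block n x) < 2 ^ (-(d * n))} ≠ ∞ := by
    refine ne_top_of_le_ne_top hsum.tsum_ofReal_ne_top (ENNReal.tsum_le_tsum fun n => ?_)
    rw [← ofReal_measureReal]
    exact ENNReal.ofReal_le_ofReal (measureReal_length_lt_le (hγ n) hc d)
  filter_upwards [ae_eventually_notMem hfin] with x hx
  filter_upwards [hx] with n hn hprob
  exact not_lt.1 fun hlen => hn ⟨hlen, hprob⟩

end Code

lemma ofReal_le_liminf_div_natCast {ℓ : ℕ → ℕ} {c : ℝ} (hc : 0 ≤ c)
    (hℓ : ∀ᶠ n : ℕ in atTop, c * n ≤ ℓ n) :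
    ENNReal.ofReal c ≤ atTop.liminf fun n : ℕ => (ℓ n : ℝ≥0∞) / (n : ℝ≥0∞) := by
  refine le_liminf_of_le (by isBoundedDefault) ?_
  filter_upwards [hℓ, eventually_gt_atTop 0] with n hn hn₀
  rw [ENNReal.le_div_iff_mul_le (Or.inl (by exact_mod_cast hn₀.ne')) (Or.inl (by simp)),
    ← ENNReal.ofReal_natCast n, ← ENNReal.ofReal_mul hc, ← ENNReal.ofReal_natCast]
  exact ENNReal.ofReal_le_ofReal hn

lemma ae_ofReal_le_liminf_length_div {α : Type*} [Fintype α] [MeasurableSpace α]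
    [MeasurableSingletonClass α] {μ : Measure (ℕ → α)} [IsProbabilityMeasure μ]
    (hμ : Ergodic shift μ) {H : ℝ} (hH : HasEntropyRate μ H)
    {γ : ∀ n : ℕ, (Fin n → α) → List Bool} (hγ : ∀ n, Function.Injective (γ n))
    {c : ℝ} (hc : c < H) :
    ∀ᵐ x ∂μ, ENNReal.ofReal c ≤
      atTop.liminf fun n : ℕ => ((γ n (block n x)).length : ℝ≥0∞) / (n : ℝ≥0∞) := by
  rcases le_or_gt c 0 with hc₀ | hc₀
  · simp [ENNReal.ofReal_of_nonpos hc₀]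
  obtain ⟨d, hcd, hdH⟩ := exists_between hc
  filter_upwards [ae_eventually_blockProb_lt hμ hH (hc₀.trans hcd).le hdH,
    ae_eventually_le_length_of_blockProb_lt μ hγ hc₀.le hcd] with x hprob hlen
  exact ofReal_le_liminf_div_natCast hc₀.le (hprob.mp hlen)

end OrnsteinShields

/-- Ornstein–Shields inequality: for any stationary ergodic source with entropy
rate `H` over a finite alphabet (modelled as a shift-ergodic probability measure
`μ` on `ℕ → α`) and any one-to-one code sequence `γ`, almost surely
`liminf_n ‖γ(x_1,…,x_n)‖ / n ≥ H`. -/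
theorem ornstein_shields_inequality {α : Type*} [Fintype α] [MeasurableSpace α]
    [MeasurableSingletonClass α]
    (μ : Measure (ℕ → α)) [IsProbabilityMeasure μ]
    (herg : Ergodic (fun x : ℕ → α => fun n => x (n + 1)) μ)
    {H : ℝ}
    (hH : Tendsto (fun n : ℕ =>
        (1 / (n : ℝ)) * -∑ w : Fin n → α,
          (μ {y | ∀ i : Fin n, y i = w i}).toReal *
            Real.logb 2 ((μ {y | ∀ i : Fin n, y i = w i}).toReal))
      atTop (nhds H))
    (γ : ∀ n : ℕ, (Fin n → α) → List Bool) (hγ : ∀ n, Function.Injective (γ n)) :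
    ∀ᵐ x ∂μ, ENNReal.ofReal H ≤
      atTop.liminf (fun n : ℕ =>
        ((γ n (fun i : Fin n => x i)).length : ℝ≥0∞) / (n : ℝ≥0∞)) := by
  obtain ⟨c, -, hcH, hc⟩ := exists_seq_strictMono_tendsto H
  have h (k : ℕ) : ∀ᵐ x ∂μ, ENNReal.ofReal (c k) ≤ atTop.liminf (fun n : ℕ =>
      ((γ n (fun i : Fin n => x i)).length : ℝ≥0∞) / (n : ℝ≥0∞)) :=
    OrnsteinShields.ae_ofReal_le_liminf_length_div herg hH hγ (hcH k)
  filter_upwards [ae_all_iff.2 h] with x hx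
  exact le_of_tendsto' (ENNReal.tendsto_ofReal hc) hx
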